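/- Let V be a finite-dimensional real vector space and R : V → V → Module.End ℝ V an ℝ-bilinear map such that R X Y = − R Y X, the first Bianchi identity R X Y Z + R Y Z X + R Z X Y = 0 holds, and the symmetric-space identity ⁅R X Y, R Z W⁆ = R (R X Y Z) W + R Z (R X Y W) holds for all X, Y, Z, W ∈ V. Then the symmetric-triple bracket ⁅(A, X), (A', X')⁆ := (⁅A, A'⁆ + R X X', A X' − A' X) is well defined on 𝔥 × V (its first component lies in 𝔥) and makes 𝔥 × V into a real Lie algebra: the bracket is ℝ-bilinear, alternating, and satisfies the Jacobi identity ⁅u, ⁅v, w⁆⁆ = ⁅⁅u, v⁆, w⁆ + ⁅v, ⁅u, w⁆⁆ for all u, v, w ∈ 𝔥 × V. -/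

import Mathlib

/-!
The symmetric-space identity says that each `R X Y` acts on the curvature tensor by zero. This
condition is linear in the acting endomorphism, so every `A ∈ 𝔥` annihilates the curvature tensor:
`⁅A, R Z W⁆ = R (A Z) W + R Z (A W)` (`lie_curvature_of_mem`). Closure of `𝔥` under commutators
(`lie_mem_holonomySpan`) follows from this by linearity in the other argument.

For the Jacobi identity, the `𝔥`-component reduces to the Jacobi identity for commutators together
with three instances of the equivariance above and skew-symmetry of `R`; the `V`-component is the
definition of the commutator together with the first Bianchi identity and skew-symmetry of `R`.
-/

/-- The holonomy Lie algebra: the span of the curvature endomorphisms. -/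
def holonomySpan {V : Type*} [AddCommGroup V] [Module ℝ V]
    (R : V →ₗ[ℝ] V →ₗ[ℝ] Module.End ℝ V) : Submodule ℝ (Module.End ℝ V) :=
  Submodule.span ℝ {T : Module.End ℝ V | ∃ X Y, R X Y = T}

/-- The symmetric-triple bracket on pairs (A, X) of an endomorphism and a vector. -/
def symTripleBracket {V : Type*} [AddCommGroup V] [Module ℝ V]
    (R : V →ₗ[ℝ] V →ₗ[ℝ] Module.End ℝ V) :
    (Module.End ℝ V × V) → (Module.End ℝ V × V) → (Module.End ℝ V × V) :=
  fun u v => (⁅u.1, v.1⁆ + R u.2 v.2, u.1 v.2 - v.1 u.2)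

/-- Every holonomy endomorphism acts on the curvature tensor as zero. -/
theorem lie_curvature_of_mem {V : Type*} [AddCommGroup V] [Module ℝ V]
    (R : V →ₗ[ℝ] V →ₗ[ℝ] Module.End ℝ V)
    (hRsym : ∀ X Y Z W, ⁅R X Y, R Z W⁆ = R (R X Y Z) W + R Z (R X Y W))
    {A : Module.End ℝ V} (hA : A ∈ holonomySpan R) (Z W : V) :
    ⁅A, R Z W⁆ = R (A Z) W + R Z (A W) := by
  induction hA using Submodule.span_induction with
  | mem T hT =>
    obtain ⟨X, Y, rfl⟩ := hT
    exact hRsym X Y Z W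
  | zero => simp [Ring.lie_def]
  | add S T _ _ hS hT =>
    have h : ⁅S + T, R Z W⁆ = ⁅S, R Z W⁆ + ⁅T, R Z W⁆ := by
      simp only [Ring.lie_def, add_mul, mul_add]
      abel
    simp only [h, hS, hT, LinearMap.add_apply, map_add]
    abel
  | smul a T _ hT =>
    have h : ⁅a • T, R Z W⁆ = a • ⁅T, R Z W⁆ := by
      simp only [Ring.lie_def, smul_mul_assoc, mul_smul_comm, smul_sub]
    simp only [h, hT, LinearMap.smul_apply, map_smul, smul_add]

theorem curvature_mem_holonomySpan {V : Type*} [AddCommGroup V] [Module ℝ V]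
    (R : V →ₗ[ℝ] V →ₗ[ℝ] Module.End ℝ V) (X Y : V) : R X Y ∈ holonomySpan R :=
  Submodule.subset_span ⟨X, Y, rfl⟩

theorem lie_mem_holonomySpan {V : Type*} [AddCommGroup V] [Module ℝ V]
    (R : V →ₗ[ℝ] V →ₗ[ℝ] Module.End ℝ V)
    (hRsym : ∀ X Y Z W, ⁅R X Y, R Z W⁆ = R (R X Y Z) W + R Z (R X Y W))
    {A B : Module.End ℝ V} (hA : A ∈ holonomySpan R) (hB : B ∈ holonomySpan R) :
    ⁅A, B⁆ ∈ holonomySpan R := by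
  induction hB using Submodule.span_induction with
  | mem T hT =>
    obtain ⟨Z, W, rfl⟩ := hT
    rw [lie_curvature_of_mem R hRsym hA]
    exact add_mem (curvature_mem_holonomySpan R _ _) (curvature_mem_holonomySpan R _ _)
  | zero => simp [Ring.lie_def]
  | add S T _ _ hS hT =>
    have h : ⁅A, S + T⁆ = ⁅A, S⁆ + ⁅A, T⁆ := by
      simp only [Ring.lie_def, add_mul, mul_add]
      abel
    rw [h]
    exact add_mem hS hT
  | smul a T _ hT =>
    have h : ⁅A, a • T⁆ = a • ⁅A, T⁆ := by
      simp only [Ring.lie_def, smul_mul_assoc, mul_smul_comm, smul_sub]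
    rw [h]
    exact Submodule.smul_mem _ a hT


/-- The symmetric-triple bracket is well defined on 𝔥 × V and makes it into a real
Lie algebra: it is bilinear, alternating, and satisfies the Jacobi identity. -/
theorem symTripleBracket_lieAlgebra
    {V : Type*} [AddCommGroup V] [Module ℝ V] [FiniteDimensional ℝ V]
    (R : V →ₗ[ℝ] V →ₗ[ℝ] Module.End ℝ V)
    (hRskew : ∀ X Y, R X Y = - R Y X)
    (hRbianchi : ∀ X Y Z, R X Y Z + R Y Z X + R Z X Y = 0)
    (hRsym : ∀ X Y Z W, ⁅R X Y, R Z W⁆ = R (R X Y Z) W + R Z (R X Y W)) :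
    (∀ u v : Module.End ℝ V × V, u.1 ∈ holonomySpan R → v.1 ∈ holonomySpan R →
        (symTripleBracket R u v).1 ∈ holonomySpan R) ∧
    (∀ (a : ℝ) (u u' v : Module.End ℝ V × V),
        u.1 ∈ holonomySpan R → u'.1 ∈ holonomySpan R → v.1 ∈ holonomySpan R →
        symTripleBracket R (a • u + u') v
          = a • symTripleBracket R u v + symTripleBracket R u' v) ∧
    (∀ (a : ℝ) (u v v' : Module.End ℝ V × V),
        u.1 ∈ holonomySpan R → v.1 ∈ holonomySpan R → v'.1 ∈ holonomySpan R →
        symTripleBracket R u (a • v + v')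
          = a • symTripleBracket R u v + symTripleBracket R u v') ∧
    (∀ u : Module.End ℝ V × V, u.1 ∈ holonomySpan R → symTripleBracket R u u = 0) ∧
    (∀ u v w : Module.End ℝ V × V,
        u.1 ∈ holonomySpan R → v.1 ∈ holonomySpan R → w.1 ∈ holonomySpan R →
        symTripleBracket R u (symTripleBracket R v w)
          = symTripleBracket R (symTripleBracket R u v) w
            + symTripleBracket R v (symTripleBracket R u w)) := by
  refine ⟨?_, ?_, ?_, ?_, ?_⟩
  · intro u v hu hv
    exact add_mem (lie_mem_holonomySpan R hRsym hu hv) (curvature_mem_holonomySpan R _ _)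
  · rintro a ⟨A, X⟩ ⟨A', X'⟩ ⟨B, Y⟩ - - -
    ext1
    · simp only [symTripleBracket, Prod.fst_add, Prod.snd_add, Prod.smul_fst, Prod.smul_snd,
        Ring.lie_def, add_mul, mul_add, smul_mul_assoc, mul_smul_comm,
        smul_sub, map_add, map_smul, LinearMap.add_apply, LinearMap.smul_apply, smul_add]
      abel
    · simp only [symTripleBracket, Prod.fst_add, Prod.snd_add, Prod.smul_fst, Prod.smul_snd,
        map_add, map_smul, LinearMap.add_apply, LinearMap.smul_apply, smul_sub]
      abel
  · rintro a ⟨A, X⟩ ⟨B, Y⟩ ⟨B', Y'⟩ - - -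
    ext1
    · simp only [symTripleBracket, Prod.fst_add, Prod.snd_add, Prod.smul_fst, Prod.smul_snd,
        Ring.lie_def, add_mul, mul_add, smul_mul_assoc, mul_smul_comm,
        smul_sub, map_add, map_smul, smul_add]
      abel
    · simp only [symTripleBracket, Prod.fst_add, Prod.snd_add, Prod.smul_fst, Prod.smul_snd,
        map_add, map_smul, LinearMap.add_apply, LinearMap.smul_apply, smul_sub]
      abel
  · rintro ⟨A, X⟩ -
    have hX : R X X = 0 := by
      have h : (2 : ℝ) • R X X = 0 := by
        rw [two_smul]
        exact eq_neg_iff_add_eq_zero.mp (hRskew X X)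
      exact (smul_eq_zero.mp h).resolve_left two_ne_zero
    ext1 <;> simp [symTripleBracket, Ring.lie_def, hX]
  · rintro ⟨A, X⟩ ⟨B, Y⟩ ⟨C, Z⟩ hA hB hC
    ext1
    · -- Equivariance, solved for the product in which the curvature term stands on the right.
      have key : ∀ T ∈ holonomySpan R, ∀ P Q : V,
          T * R P Q = R (T P) Q + R P (T Q) + R P Q * T := fun T hT P Q => by
        rw [← lie_curvature_of_mem R hRsym hT, Ring.lie_def, sub_add_cancel]
      simp only [symTripleBracket, Prod.mk_add_mk, Ring.lie_def, mul_add, add_mul, mul_sub,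
        sub_mul, mul_assoc, map_sub, LinearMap.sub_apply, key A hA, key B hB, key C hC,
        hRskew Y (C X)]
      abel
    · have hb : R Y Z X = R X Z Y - R X Y Z := by
        have h := hRbianchi X Y Z
        rw [hRskew Z X, LinearMap.neg_apply] at h
        rw [← sub_eq_zero, ← h]
        abel
      simp only [symTripleBracket, Prod.mk_add_mk, map_sub, LinearMap.add_apply, LinearMap.sub_apply,
        Ring.lie_def, Module.End.mul_apply, hb]
      abel
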